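/- The complete graph K_n with n even can be decomposed into exactly n/2 edge-disjoint Hamiltonian paths (Walecki decomposition). -/

import Mathlib

open SimpleGraph

/-- A path decomposition of `G`: a list of paths such that every edge of `G`
lies in exactly one of them. -/
def IsPathDecomp {V : Type*} (G : SimpleGraph V)
    (P : List (Σ u v : V, G.Walk u v)) : Prop :=
  (∀ p ∈ P, p.2.2.IsPath) ∧
  P.Pairwise (fun p q => ∀ e, e ∈ p.2.2.edges → e ∉ q.2.2.edges) ∧
  ∀ e, e ∈ G.edgeSet ↔ ∃ p ∈ P, e ∈ p.2.2.edges

/-!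
Label the vertices by `ℤ/n`. The zigzag `0, 1, -1, 2, -2, …` visits every residue once, and
consecutive terms sum alternately to `1` and `0`; hence its translate by `c` is a Hamiltonian
path using exactly the edges `{a, b}` with `a + b ∈ {2c, 2c + 1}`. If `n = 2m`, the pairs
`{2c, 2c + 1}` with `0 ≤ c < m` partition `ℤ/n`, so the translates by these `c` partition the
edges of `K_n`.
-/

section Walks

variable {V : Type*}

lemma exists_walk_support_edges_eq_map_range (G : SimpleGraph V) (f : ℕ → V) (k : ℕ)
    (hadj : ∀ j < k, G.Adj (f j) (f (j + 1))) :
    ∃ w : G.Walk (f 0) (f k), w.support = (List.range (k + 1)).map f ∧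
      w.edges = (List.range k).map fun j => s(f j, f (j + 1)) := by
  induction k with
  | zero => exact ⟨Walk.nil, by simp, by simp⟩
  | succ k ih =>
    obtain ⟨w, hsupport, hedges⟩ := ih fun j hj => hadj j (by omega)
    refine ⟨w.concat (hadj k k.lt_succ_self), ?_, ?_⟩
    · simp [Walk.support_concat, hsupport, List.range_succ (n := k + 1)]
    · simp [Walk.edges_concat, hedges, List.range_succ (n := k)]

lemma exists_isHamiltonian_top_of_bijOn [DecidableEq V] {f : ℕ → V} {n : ℕ} (hn : n ≠ 0)
    (hf : Set.BijOn f (Set.Iio n) Set.univ) :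
    ∃ p : Σ u v : V, (⊤ : SimpleGraph V).Walk u v, p.2.2.IsHamiltonian ∧
      ∀ e, e ∈ p.2.2.edges ↔ ∃ j, j + 1 < n ∧ s(f j, f (j + 1)) = e := by
  obtain ⟨k, rfl⟩ := Nat.exists_eq_succ_of_ne_zero hn
  have hadj : ∀ j < k, (⊤ : SimpleGraph V).Adj (f j) (f (j + 1)) := fun j hj h =>
    j.succ_ne_self (hf.injOn (Nat.lt_succ_of_lt hj) (Nat.succ_lt_succ hj) h).symm
  obtain ⟨w, hsupport, hedges⟩ := exists_walk_support_edges_eq_map_range ⊤ f k hadj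
  have hpath : w.IsPath := by
    rw [Walk.isPath_def, hsupport]
    exact List.nodup_range.map_on fun i hi j hj =>
      hf.injOn (List.mem_range.1 hi) (List.mem_range.1 hj)
  refine ⟨⟨_, _, w⟩, hpath.isHamiltonian_of_mem fun v => ?_, fun e => ?_⟩
  · obtain ⟨j, hj, rfl⟩ := hf.surjOn (Set.mem_univ v)
    exact hsupport ▸ List.mem_map_of_mem (List.mem_range.2 hj)
  · simp [hedges]

lemma isPathDecomp_ofFn {G : SimpleGraph V} {k : ℕ} {p : Fin k → Σ u v : V, G.Walk u v}
    (color : Sym2 V → Fin k) (hp : ∀ i, (p i).2.2.IsPath)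
    (hcolor : ∀ i e, e ∈ (p i).2.2.edges ↔ e ∈ G.edgeSet ∧ color e = i) :
    IsPathDecomp G (List.ofFn p) := by
  refine ⟨List.forall_mem_ofFn_iff.2 hp, List.pairwise_ofFn.2 fun i j hij e hi hj => ?_,
    fun e => ⟨fun he => ?_, ?_⟩⟩
  · exact hij.ne (((hcolor i e).1 hi).2.symm.trans ((hcolor j e).1 hj).2)
  · exact ⟨p (color e), List.mem_ofFn.2 ⟨_, rfl⟩, (hcolor _ e).2 ⟨he, rfl⟩⟩
  · rintro ⟨_, -, he⟩
    exact Walk.edges_subset_edgeSet _ he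

end Walks

section Zigzag

/-- The sequence `0, 1, -1, 2, -2, …` enumerating the integers. -/
def zigzag (j : ℕ) : ℤ := if Even j then -(j / 2 : ℕ) else (j / 2 : ℕ) + 1

lemma zigzag_add_zigzag_succ (j : ℕ) :
    zigzag j + zigzag (j + 1) = if Even j then 1 else 0 := by
  unfold zigzag
  grind

lemma zigzag_injective : Function.Injective zigzag := by
  intro j k h
  unfold zigzag at h
  grind

lemma abs_zigzag_sub_zigzag_lt {n j k : ℕ} (hj : j < n) (hk : k < n) :
    |zigzag j - zigzag k| < n := by
  have hbounds : ∀ i < n, -(n : ℤ) < 2 * zigzag i ∧ 2 * zigzag i ≤ n := by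
    intro i hi
    unfold zigzag
    grind
  have := hbounds j hj
  have := hbounds k hk
  exact abs_lt.2 (by constructor <;> linarith)

end Zigzag

section ZigzagMod

open Fin.CommRing

variable {n : ℕ} [NeZero n]

/-- The `j`-th vertex of the zigzag `c, c + 1, c - 1, c + 2, c - 2, …` around `c` modulo `n`.
It is defined for all `j : ℕ`, but only `j < n` are the vertices of Walecki's path. -/
def zigzagMod (c : Fin n) (j : ℕ) : Fin n := c + (zigzag j : Fin n)

lemma bijOn_zigzagMod (c : Fin n) : Set.BijOn (zigzagMod c) (Set.Iio n) Set.univ := by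
  have hinj : Set.InjOn (zigzagMod c) (Set.Iio n) := by
    intro j hj k hk h
    have hmod : zigzag j ≡ zigzag k [ZMOD n] :=
      (CharP.intCast_eq_intCast (Fin n) n).1 (add_left_cancel h)
    exact zigzag_injective <| sub_eq_zero.1 <|
      Int.eq_zero_of_abs_lt_dvd hmod.symm.dvd (abs_zigzag_sub_zigzag_lt hj hk)
  refine ⟨Set.mapsTo_univ _ _, hinj, ?_⟩
  simpa using Finset.surjOn_of_injOn_of_card_le (s := Finset.Iio n) (t := Finset.univ)
    (zigzagMod c) (by simp) (by simpa using hinj) (by simp)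

lemma zigzagMod_add_zigzagMod_succ (c : Fin n) (j : ℕ) :
    zigzagMod c j + zigzagMod c (j + 1) = 2 * c + if Even j then 1 else 0 := by
  have hsum := congrArg (Int.cast (R := Fin n)) (zigzag_add_zigzag_succ j)
  push_cast at hsum
  rw [← hsum, zigzagMod, zigzagMod]
  ring

lemma zigzagMod_zero (c : Fin n) : zigzagMod c 0 = c := by
  simp [zigzagMod, zigzag]

lemma zigzagMod_succ_eq_self (c : Fin n) {j : ℕ} (hj : j + 1 = n) :
    zigzagMod c (j + 1) = zigzagMod c j := by
  have hmod : zigzag (j + 1) ≡ zigzag j [ZMOD n] := by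
    rw [Int.modEq_iff_dvd]
    unfold zigzag
    rcases j.even_or_odd with h | h
    · exact ⟨-1, by grind⟩
    · exact ⟨1, by grind⟩
  rw [zigzagMod, zigzagMod, (CharP.intCast_eq_intCast (Fin n) n).2 hmod]

lemma exists_zigzagMod_edge_eq_iff {c a b : Fin n} :
    (∃ j, j + 1 < n ∧ s(zigzagMod c j, zigzagMod c (j + 1)) = s(a, b)) ↔
      a ≠ b ∧ (a + b = 2 * c ∨ a + b = 2 * c + 1) := by
  constructor
  · rintro ⟨j, hj, h⟩
    have hne : zigzagMod c j ≠ zigzagMod c (j + 1) := fun h =>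
      j.succ_ne_self ((bijOn_zigzagMod c).injOn (Nat.lt_of_succ_lt hj) hj h).symm
    have hsum : zigzagMod c j + zigzagMod c (j + 1) = 2 * c ∨
        zigzagMod c j + zigzagMod c (j + 1) = 2 * c + 1 := by
      rw [zigzagMod_add_zigzagMod_succ]
      split_ifs <;> simp
    obtain ⟨rfl, rfl⟩ | ⟨rfl, rfl⟩ := Sym2.eq_iff.1 h
    · exact ⟨hne, hsum⟩
    · exact ⟨hne.symm, by rwa [add_comm (zigzagMod c (j + 1))]⟩
  · rintro ⟨hab, hsum⟩
    obtain ⟨j, hj, rfl⟩ := (bijOn_zigzagMod c).surjOn (Set.mem_univ a)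
    have hnext := zigzagMod_add_zigzagMod_succ c j
    -- One admissible sum leads to the next vertex and the other to the previous one. At either end
    -- of the path the sum leading outwards is that of the end vertex with itself.
    by_cases hb : b = zigzagMod c (j + 1)
    · subst hb
      have hlast : j + 1 ≠ n := fun hjn => hab (zigzagMod_succ_eq_self c hjn).symm
      exact ⟨j, lt_of_le_of_ne hj hlast, rfl⟩
    cases j with
    | zero =>
      have hloop : zigzagMod c 0 = b := by grind [zigzagMod_zero]
      exact absurd hloop hab
    | succ j =>
      have hprev := zigzagMod_add_zigzagMod_succ c j
      have hb_prev : b = zigzagMod c j := by grind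
      exact ⟨j, hj, by rw [hb_prev, Sym2.eq_swap]⟩

end ZigzagMod

section EdgeColoring

/-- The index of the Walecki path of `K_{2m}` containing the edge `{a, b}`: the `i` for which
`a + b` is `2i` or `2i + 1` modulo `2m`. Junk on loops. -/
def waleckiColor {m : ℕ} : Sym2 (Fin (2 * m)) → Fin m :=
  Sym2.lift ⟨fun a b => ⟨(a + b).val / 2, Nat.div_lt_of_lt_mul (a + b).isLt⟩,
    fun a b => by simp [add_comm]⟩

open Fin.CommRing in
lemma waleckiColor_eq_iff {m : ℕ} [NeZero m] {a b : Fin (2 * m)} {i : Fin m} :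
    waleckiColor s(a, b) = i ↔
      a + b = ((2 * i : ℕ) : Fin (2 * m)) ∨ a + b = ((2 * i + 1 : ℕ) : Fin (2 * m)) := by
  have hi := i.isLt
  rw [Fin.ext_iff, Fin.ext_iff, Fin.ext_iff, Fin.val_cast_of_lt (by omega),
    Fin.val_cast_of_lt (by omega)]
  change (a + b).val / 2 = i ↔ _
  omega

open Fin.CommRing in
lemma exists_isHamiltonian_mem_edges_iff_waleckiColor {m : ℕ} (i : Fin m) :
    ∃ p : Σ u v : Fin (2 * m), (⊤ : SimpleGraph (Fin (2 * m))).Walk u v,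
      p.2.2.IsHamiltonian ∧
      ∀ e, e ∈ p.2.2.edges ↔ e ∈ (⊤ : SimpleGraph (Fin (2 * m))).edgeSet ∧ waleckiColor e = i := by
  have : NeZero m := ⟨i.pos.ne'⟩
  obtain ⟨p, hp, hedges⟩ := exists_isHamiltonian_top_of_bijOn (NeZero.ne (2 * m))
    (bijOn_zigzagMod ((i : ℕ) : Fin (2 * m)))
  refine ⟨p, hp, Sym2.ind fun a b => ?_⟩
  rw [hedges, exists_zigzagMod_edge_eq_iff, mem_edgeSet, top_adj, waleckiColor_eq_iff]
  push_cast
  rfl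

end EdgeColoring

/-- Walecki: for even `n`, `K_n` decomposes into exactly `n/2`
edge-disjoint Hamiltonian paths. -/
theorem walecki_decomposition (n : ℕ) (hn : Even n) :
    ∃ P : List (Σ u v : Fin n, (⊤ : SimpleGraph (Fin n)).Walk u v),
      IsPathDecomp ⊤ P ∧ P.length = n / 2 ∧
      ∀ p ∈ P, p.2.2.IsHamiltonian := by
  obtain ⟨m, rfl⟩ := hn.two_dvd
  choose p hp hcolor using exists_isHamiltonian_mem_edges_iff_waleckiColor (m := m)
  exact ⟨List.ofFn p, isPathDecomp_ofFn waleckiColor (fun i => (hp i).isPath) hcolor,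
    by simp, List.forall_mem_ofFn_iff.2 hp⟩
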